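/- For every p̄ ∈ S: the empirical measures e_n(x) converge in the weak* topology to ν_p̄ as n → ∞ if and only if τ̄_k(x)/τ_k(x) → p̄ as k → ∞. -/

import Mathlib

open MeasureTheory Filter Topology Set
open scoped ENNReal

noncomputable section

variable {X : Type*} [MetricSpace X] [CompactSpace X] [MeasurableSpace X] [BorelSpace X]

/-- The `n`-th empirical measure `e_n(x) = (1/n) ∑_{k<n} δ_{f^k x}`. -/
def empMeasure (f : X → X) (n : ℕ) (x : X) : Measure X :=
  (n : ℝ≥0∞)⁻¹ • ∑ k ∈ Finset.range n, Measure.dirac (f^[k] x)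

/-- Weak* convergence of a sequence of measures, tested against bounded continuous functions. -/
def WeakTendsto (μ : ℕ → Measure X) (ν : Measure X) : Prop :=
  ∀ g : BoundedContinuousFunction X ℝ,
    Tendsto (fun n => ∫ y, g y ∂(μ n)) atTop (𝓝 (∫ y, g y ∂ν))

/-- `V(x)`: the set of weak* limit points of `(e_n(x))_{n ≥ 1}`. -/
def Vset (f : X → X) (x : X) : Set (Measure X) :=
  {ν | ∃ φ : ℕ → ℕ, StrictMono φ ∧ WeakTendsto (fun k => empMeasure f (φ k + 1) x) ν}

/-- The simplex `S = {p̄ ∈ [0,1]^d : p₁ + ⋯ + p_d = 1}`. -/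
def simplexS (d : ℕ) : Set (Fin d → ℝ) :=
  {p | (∀ i, p i ∈ Set.Icc (0:ℝ) 1) ∧ ∑ i, p i = 1}

/-- The measure `ν_p̄ = ∑_j p_j δ_{ξ_j}`. -/
def nuMeasure {d : ℕ} (ξ : Fin d → X) (p : Fin d → ℝ) : Measure X :=
  ∑ j, ENNReal.ofReal (p j) • Measure.dirac (ξ j)

/-- The first hit time `τ(x) = min {n ≥ 1 : f^n(x) ∈ Y}` (junk value `0` if the orbit
never hits `Y`). -/
def hitTime (f : X → X) (Y : Set X) (x : X) : ℕ :=
  sInf {n | 1 ≤ n ∧ f^[n] x ∈ Y}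

/-- The first return map `F = f^τ`. -/
def retMap (f : X → X) (Y : Set X) (x : X) : X :=
  f^[hitTime f Y x] x

/-- The Birkhoff sums `τ_k(x) = ∑_{j<k} τ(F^j x)` of the return time under `F`. -/
def tauSum (f : X → X) (Y : Set X) (k : ℕ) (x : X) : ℕ :=
  ∑ j ∈ Finset.range k, hitTime f Y ((retMap f Y)^[j] x)

/-- `τ^{(i)}(y) = #{1 ≤ n ≤ τ(y) : f^n(y) ∈ A}` (with `A = X_i`). -/
def tauJ (f : X → X) (Y A : Set X) (y : X) : ℕ :=
  ∑ n ∈ Finset.Icc 1 (hitTime f Y y), A.indicator (fun _ => 1) (f^[n] y)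

/-- The Birkhoff sums `τ^{(i)}_k(x) = ∑_{j<k} τ^{(i)}(F^j x)`. -/
def tauJSum (f : X → X) (Y A : Set X) (k : ℕ) (x : X) : ℕ :=
  ∑ j ∈ Finset.range k, tauJ f Y A ((retMap f Y)^[j] x)

/-- The vector of ratios `τ̄_k(x)/τ_k(x) ∈ [0,1]^d`. -/
def tauRatio (f : X → X) (Y : Set X) {d : ℕ} (Xp : Fin d → Set X) (k : ℕ) (x : X) :
    Fin d → ℝ :=
  fun i => (tauJSum f Y (Xp i) k x : ℝ) / (tauSum f Y k x : ℝ)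

/-- `T(x) ⊆ [0,1]^d`: the set of limit points of the sequence `(τ̄_k(x)/τ_k(x))_{k ≥ 1}`. -/
def Tset (f : X → X) (Y : Set X) {d : ℕ} (Xp : Fin d → Set X) (x : X) :
    Set (Fin d → ℝ) :=
  {p | ∃ φ : ℕ → ℕ, StrictMono φ ∧
    Tendsto (fun k => tauRatio f Y Xp (φ k + 1) x) atTop (𝓝 p)}

/-!
If the mass of `e_n(x)` concentrates at the points `ξ_j`, then against `e_n(x)` a continuous
function `g` behaves like the step function equal to `g (ξ_j)` on `X_j`, so that weak* convergence
to `ν_p̄` amounts to `e_n(x)(X_j) → p_j` for every `j`. Concentration holds in both directions: it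
follows from weak* convergence by Urysohn's lemma, and from `e_n(x)(X_j) → p_j` because then
`e_n(x)(Y) → 0`, while by bounded hit times the points outside a neighbourhood of the `ξ_j` reach
`Y` within a bounded time.

It remains to compare with `τ̄_k(x) / τ_k(x)`, whose `j`-th entry is `e_n(x)(X_j)` at `n = τ_k(x)`.
Between consecutive returns the orbit stays in a single `X_i`, so once the step spent in `Y` is
over, `n ↦ e_n(x)(X_j)` is monotone up to the next return, and convergence along the return times
forces convergence along all times.
-/

section OrbitSegments

variable {α : Type*} {f : α → α} {x : α}

theorem birkhoffSum_apply_eq_of_apply_iterate_eq {M : Type*} [AddCommMonoid M] [IsRightCancelAdd M]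
    {g : α → M} {n : ℕ} (h : g (f^[n] x) = g x) :
    birkhoffSum f g n (f x) = birkhoffSum f g n x := by
  have hsum : g x + birkhoffSum f g n (f x) = birkhoffSum f g n x + g x := by
    rw [← birkhoffSum_succ', birkhoffSum_succ, h]
  exact add_right_cancel ((add_comm _ _).trans hsum)

theorem birkhoffSum_eq_add_nsmul {M : Type*} [AddCommMonoid M] {g : α → M} {s : M} {a n : ℕ}
    (han : a ≤ n) (hs : ∀ m ∈ Ico a n, g (f^[m] x) = s) :
    birkhoffSum f g n x = birkhoffSum f g a x + (n - a) • s := by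
  obtain ⟨k, rfl⟩ := Nat.exists_eq_add_of_le han
  have hconst : ∀ m ∈ Finset.range k, g (f^[m] (f^[a] x)) = s := fun m hm => by
    rw [← Function.iterate_add_apply, add_comm]
    exact hs _ ⟨by omega, by have := Finset.mem_range.1 hm; omega⟩
  rw [birkhoffSum_add, birkhoffSum, birkhoffSum, Finset.sum_congr rfl hconst]
  simp

theorem affine_div_mem_uIcc (a b : ℝ) {r s t : ℝ} (hr : 0 < r) (hrs : r ≤ s) (hst : s ≤ t) :
    (a + b * s) / s ∈ uIcc ((a + b * r) / r) ((a + b * t) / t) := by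
  have hs : 0 < s := hr.trans_le hrs
  have hsplit : ∀ {y : ℝ}, 0 < y → (a + b * y) / y = a * y⁻¹ + b := fun hy => by
    field_simp
  have hinv_rs : s⁻¹ ≤ r⁻¹ := inv_anti₀ hr hrs
  have hinv_st : t⁻¹ ≤ s⁻¹ := inv_anti₀ hs hst
  rw [hsplit hr, hsplit hs, hsplit (hs.trans_le hst), mem_uIcc]
  rcases le_total 0 a with ha | ha
  · exact Or.inr ⟨by gcongr, by gcongr⟩
  · exact Or.inl ⟨add_le_add_left (mul_le_mul_of_nonpos_left hinv_rs ha) b,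
      add_le_add_left (mul_le_mul_of_nonpos_left hinv_st ha) b⟩

theorem birkhoffAverage_mem_uIcc {g : α → ℝ} {s : ℝ} {a n b : ℕ} (ha : 0 < a) (han : a ≤ n)
    (hnb : n ≤ b) (hs : ∀ m ∈ Ico a b, g (f^[m] x) = s) :
    birkhoffAverage ℝ f g n x ∈ uIcc (birkhoffAverage ℝ f g a x) (birkhoffAverage ℝ f g b x) := by
  have haffine : ∀ m, a ≤ m → m ≤ b →
      birkhoffAverage ℝ f g m x = ((birkhoffSum f g a x - a * s) + s * m) / m := by
    intro m ham hmb
    rw [birkhoffAverage, smul_eq_mul, birkhoffSum_eq_add_nsmul ham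
      (fun i hi => hs i ⟨hi.1, hi.2.trans_le hmb⟩), nsmul_eq_mul, Nat.cast_sub ham]
    ring
  rw [haffine a le_rfl (han.trans hnb), haffine n han hnb, haffine b (han.trans hnb) le_rfl]
  exact affine_div_mem_uIcc _ _ (by exact_mod_cast ha) (by exact_mod_cast han)
    (by exact_mod_cast hnb)

theorem tendsto_of_forall_mem_uIcc {β : Type*} [LinearOrder β] [TopologicalSpace β]
    [OrderTopology β] {t : ℕ → ℕ} (ht : StrictMono t) {u v w : ℕ → β} {q : β}
    (hv : Tendsto v atTop (𝓝 q)) (hw : Tendsto w atTop (𝓝 q))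
    (h : ∀ k, ∀ n ∈ Ioc (t k) (t (k + 1)), u n ∈ uIcc (v k) (w k)) :
    Tendsto u atTop (𝓝 q) := by
  have hblock : ∀ n, t 0 < n → ∃ k, n ∈ Ioc (t k) (t (k + 1)) := fun n hn =>
    ht.exists_between_of_tendsto_atTop ht.tendsto_atTop hn
  choose! κ hκ using hblock
  have hκ_atTop : Tendsto κ atTop atTop := by
    refine tendsto_atTop.2 fun K => ?_
    filter_upwards [eventually_gt_atTop (t K)] with n hn
    have hn' := (hκ n ((ht.monotone K.zero_le).trans_lt hn)).2
    exact Nat.lt_succ_iff.1 (ht.lt_iff_lt.1 (hn.trans_le hn'))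
  have hu : ∀ᶠ n in atTop, u n ∈ uIcc (v (κ n)) (w (κ n)) :=
    (eventually_gt_atTop (t 0)).mono fun n hn => h _ n (hκ n hn)
  have hinf := (hv.inf_nhds hw).comp hκ_atTop
  have hsup := (hv.sup_nhds hw).comp hκ_atTop
  rw [inf_idem] at hinf
  rw [sup_idem] at hsup
  exact tendsto_of_tendsto_of_tendsto_of_le_of_le' hinf hsup (hu.mono fun _ h => h.1)
    (hu.mono fun _ h => h.2)

theorem tendsto_birkhoffAverage_of_tendsto_comp {g : α → ℝ} {t : ℕ → ℕ} (ht : StrictMono t)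
    (hzero : ∀ k, g (f^[t k] x) = 0)
    (hconst : ∀ k, ∃ s, ∀ m ∈ Ioo (t k) (t (k + 1)), g (f^[m] x) = s) {q : ℝ}
    (h : Tendsto (fun k => birkhoffAverage ℝ f g (t k) x) atTop (𝓝 q)) :
    Tendsto (birkhoffAverage ℝ f g · x) atTop (𝓝 q) := by
  have hstep : ∀ k, birkhoffAverage ℝ f g (t k + 1) x =
      birkhoffAverage ℝ f g (t k) x * ((t k : ℝ) / (t k + 1)) := fun k => by
    rcases Nat.eq_zero_or_pos (t k) with h0 | hpos
    · have := hzero k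
      simp_all
    · have : (0 : ℝ) < t k := by exact_mod_cast hpos
      simp only [birkhoffAverage, birkhoffSum_succ, hzero, smul_eq_mul, Nat.cast_add_one, add_zero]
      field_simp
  have hsucc : Tendsto (fun k => birkhoffAverage ℝ f g (t k + 1) x) atTop (𝓝 q) := by
    simp only [hstep]
    simpa using h.mul ((tendsto_natCast_div_add_atTop (1 : ℝ)).comp ht.tendsto_atTop)
  refine tendsto_of_forall_mem_uIcc ht hsucc ((tendsto_add_atTop_iff_nat 1).2 h) fun k n hn => ?_
  obtain ⟨s, hs⟩ := hconst k
  exact birkhoffAverage_mem_uIcc (Nat.succ_pos _) hn.1 hn.2 hs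

theorem tendsto_birkhoffAverage_iterate {E : Type*} [NormedAddCommGroup E] [NormedSpace ℝ E]
    {g : α → E} (hg : Bornology.IsBounded (range g)) {c : E}
    (h : Tendsto (birkhoffAverage ℝ f g · x) atTop (𝓝 c)) (l : ℕ) :
    Tendsto (birkhoffAverage ℝ f g · (f^[l] x)) atTop (𝓝 c) := by
  induction l with
  | zero => exact h
  | succ l ih =>
    simpa [Function.iterate_succ_apply'] using
      (tendsto_birkhoffAverage_apply_sub_birkhoffAverage' ℝ hg f (f^[l] x)).add ih

theorem indicator_one_le_sum_indicator_iterate {K Y : Set α} {B : ℕ}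
    (hB : ∀ z ∈ K, ∃ l ≤ B, f^[l] z ∈ Y) (z : α) :
    K.indicator (1 : α → ℝ) z ≤ ∑ l ∈ Finset.range (B + 1), Y.indicator 1 (f^[l] z) := by
  have hnonneg : ∀ l, 0 ≤ Y.indicator (1 : α → ℝ) (f^[l] z) := fun l =>
    indicator_nonneg (fun _ _ => zero_le_one) _
  refine indicator_apply_le' (fun hz => ?_) fun _ => Finset.sum_nonneg fun l _ => hnonneg l
  obtain ⟨l, hl, hlY⟩ := hB z hz
  calc (1 : ℝ) = Y.indicator 1 (f^[l] z) := by simp [hlY]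
    _ ≤ _ := Finset.single_le_sum (fun i _ => hnonneg i) (Finset.mem_range_succ_iff.2 hl)

theorem tendsto_birkhoffAverage_indicator_zero_of_hit {K Y : Set α} {B : ℕ}
    (hB : ∀ z ∈ K, ∃ l ≤ B, f^[l] z ∈ Y)
    (hY : Tendsto (birkhoffAverage ℝ f (Y.indicator (1 : α → ℝ)) · x) atTop (𝓝 0)) :
    Tendsto (birkhoffAverage ℝ f (K.indicator (1 : α → ℝ)) · x) atTop (𝓝 0) := by
  have hbdd : Bornology.IsBounded (range (Y.indicator (1 : α → ℝ))) :=
    (Metric.isBounded_Icc 0 1).subset <| range_subset_iff.2 fun z =>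
      ⟨indicator_nonneg (fun _ _ => zero_le_one) z, indicator_le_self' (fun _ _ => zero_le_one) z⟩
  have hsum : Tendsto
      (fun n => ∑ l ∈ Finset.range (B + 1),
        birkhoffAverage ℝ f (Y.indicator (1 : α → ℝ)) n (f^[l] x))
      atTop (𝓝 0) := by
    simpa using tendsto_finsetSum (Finset.range (B + 1))
      fun l _ => tendsto_birkhoffAverage_iterate hbdd hY l
  refine squeeze_zero (fun n => ?_) (fun n => ?_) hsum
  · exact mul_nonneg (by positivity)
      (Finset.sum_nonneg fun _ _ => indicator_nonneg (fun _ _ => zero_le_one) _)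
  · simp only [birkhoffAverage, birkhoffSum, smul_eq_mul]
    rw [← Finset.mul_sum, Finset.sum_comm]
    refine mul_le_mul_of_nonneg_left (Finset.sum_le_sum fun m _ => ?_) (by positivity)
    simpa only [← Function.iterate_add_apply, add_comm] using
      indicator_one_le_sum_indicator_iterate hB (f^[m] x)

end OrbitSegments

section ReturnTimes

variable {α : Type*} {f : α → α} {Y : Set α} {x : α}

theorem hitTime_spec (h : ∃ n, 1 ≤ n ∧ f^[n] x ∈ Y) :
    1 ≤ hitTime f Y x ∧ f^[hitTime f Y x] x ∈ Y :=
  Nat.sInf_mem h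

theorem iterate_notMem_of_lt_hitTime {m : ℕ} (hm : 1 ≤ m) (hlt : m < hitTime f Y x) :
    f^[m] x ∉ Y := fun h => Nat.notMem_of_lt_sInf hlt ⟨hm, h⟩

theorem tauSum_succ (k : ℕ) :
    tauSum f Y (k + 1) x = tauSum f Y k x + hitTime f Y ((retMap f Y)^[k] x) :=
  Finset.sum_range_succ _ _

theorem iterate_retMap (k : ℕ) : (retMap f Y)^[k] x = f^[tauSum f Y k x] x := by
  induction k with
  | zero => rfl
  | succ k ih =>
    rw [Function.iterate_succ_apply', tauSum_succ, add_comm, Function.iterate_add_apply, ← ih]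
    rfl

theorem hitTime_iterate_retMap_spec (hrec : ∃ᶠ n in atTop, f^[n] x ∈ Y) (k : ℕ) :
    1 ≤ hitTime f Y ((retMap f Y)^[k] x) ∧
      f^[hitTime f Y ((retMap f Y)^[k] x)] ((retMap f Y)^[k] x) ∈ Y := by
  refine hitTime_spec ?_
  obtain ⟨n, hn, hnY⟩ := frequently_atTop.1 hrec (tauSum f Y k x + 1)
  refine ⟨n - tauSum f Y k x, by omega, ?_⟩
  rwa [iterate_retMap, ← Function.iterate_add_apply, Nat.sub_add_cancel (by omega)]

theorem tauSum_strictMono (hrec : ∃ᶠ n in atTop, f^[n] x ∈ Y) :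
    StrictMono fun k => tauSum f Y k x := by
  refine strictMono_nat_of_lt_succ fun k => ?_
  have := (hitTime_iterate_retMap_spec hrec k).1
  rw [tauSum_succ]
  omega

theorem iterate_tauSum_mem (hx : x ∈ Y) (hrec : ∃ᶠ n in atTop, f^[n] x ∈ Y) (k : ℕ) :
    f^[tauSum f Y k x] x ∈ Y := by
  cases k with
  | zero => exact hx
  | succ k =>
    rw [tauSum_succ, add_comm, Function.iterate_add_apply, ← iterate_retMap]
    exact (hitTime_iterate_retMap_spec hrec k).2

theorem iterate_notMem_of_mem_Ioo_tauSum {k m : ℕ}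
    (hm : m ∈ Ioo (tauSum f Y k x) (tauSum f Y (k + 1) x)) : f^[m] x ∉ Y := by
  obtain ⟨h1, h2⟩ := hm
  rw [tauSum_succ, iterate_retMap] at h2
  have := iterate_notMem_of_lt_hitTime (f := f) (Y := Y) (x := f^[tauSum f Y k x] x)
    (m := m - tauSum f Y k x) (by omega) (by omega)
  rwa [← Function.iterate_add_apply, Nat.sub_add_cancel (by omega)] at this

theorem tauJ_eq_birkhoffSum (A : Set α) :
    tauJ f Y A x = birkhoffSum f (A.indicator 1) (hitTime f Y x) (f x) := by
  rw [birkhoffSum, Finset.range_eq_Ico]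
  exact (Finset.sum_Ico_add' (fun m => A.indicator (1 : α → ℕ) (f^[m] x)) 0 _ 1).symm

theorem tauJSum_eq_birkhoffSum (A : Set α) (k : ℕ) :
    tauJSum f Y A k x = birkhoffSum f (A.indicator 1) (tauSum f Y k x) (f x) := by
  induction k with
  | zero => rfl
  | succ k ih =>
    have hsucc : tauJSum f Y A (k + 1) x =
        tauJSum f Y A k x + tauJ f Y A ((retMap f Y)^[k] x) := Finset.sum_range_succ _ _
    rw [hsucc, ih, tauSum_succ, birkhoffSum_add, tauJ_eq_birkhoffSum,
      ← Function.iterate_succ_apply, Function.iterate_succ_apply', ← iterate_retMap]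

theorem tauRatio_apply_eq_birkhoffAverage (hx : x ∈ Y) (hrec : ∃ᶠ n in atTop, f^[n] x ∈ Y)
    {d : ℕ} (A : Fin d → Set α) (j : Fin d) (hA : Disjoint (A j) Y) (k : ℕ) :
    tauRatio f Y A k x j =
      birkhoffAverage ℝ f ((A j).indicator (1 : α → ℝ)) (tauSum f Y k x) x := by
  have hout : ∀ y ∈ Y, (A j).indicator (1 : α → ℕ) y = 0 := fun y hy =>
    indicator_of_notMem (hA.notMem_of_mem_right hy) _
  have hcast : ((A j).indicator (1 : α → ℝ)) = Nat.castRingHom ℝ ∘ (A j).indicator 1 := by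
    ext y
    by_cases hy : y ∈ A j <;> simp [hy]
  rw [tauRatio, tauJSum_eq_birkhoffSum, birkhoffSum_apply_eq_of_apply_iterate_eq
    ((hout _ (iterate_tauSum_mem hx hrec k)).trans (hout x hx).symm), birkhoffAverage, hcast,
    ← map_birkhoffSum, smul_eq_mul, div_eq_inv_mul, Nat.coe_castRingHom]

theorem forall_mem_or_forall_notMem_of_noCrossing {ι : Type*} {A : ι → Set α}
    (hU : ⋃ j, A j = Yᶜ)
    (hnc : ∀ z : α, ∀ n m : ℕ, ∀ i j, i ≠ j →
      f^[n] z ∈ A i → f^[n + m] z ∈ A j → ∃ k, 0 < k ∧ k < m ∧ f^[n + k] z ∈ Y)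
    {a b : ℕ} (hab : ∀ m ∈ Ioo a b, f^[m] x ∉ Y) (j : ι) :
    (∀ m ∈ Ioo a b, f^[m] x ∈ A j) ∨ ∀ m ∈ Ioo a b, f^[m] x ∉ A j := by
  have hle : ∀ m ∈ Ioo a b, ∀ m' ∈ Ioo a b, m ≤ m' → ∀ i i',
      f^[m] x ∈ A i → f^[m'] x ∈ A i' → i = i' := by
    intro m hm m' hm' hmm' i i' hi hi'
    by_contra hne
    obtain ⟨l, rfl⟩ := Nat.exists_eq_add_of_le hmm'
    obtain ⟨k, -, hkl, hkY⟩ := hnc x m l i i' hne hi hi'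
    exact hab (m + k) ⟨hm.1.trans_le (Nat.le_add_right m k),
      (Nat.add_lt_add_left hkl m).trans hm'.2⟩ hkY
  refine or_iff_not_imp_right.2 fun hsome m' hm' => ?_
  push Not at hsome
  obtain ⟨m, hm, hmj⟩ := hsome
  obtain ⟨i, hi⟩ : ∃ i, f^[m'] x ∈ A i := mem_iUnion.1 (hU ▸ hab m' hm')
  rcases le_total m m' with h | h
  · rwa [hle m hm m' hm' h j i hmj hi]
  · rwa [← hle m' hm' m hm h i j hi hmj]

theorem tendsto_tauRatio_iff {d : ℕ} {A : Fin d → Set α} (hU : ⋃ j, A j = Yᶜ)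
    (hnc : ∀ z : α, ∀ n m : ℕ, ∀ i j, i ≠ j →
      f^[n] z ∈ A i → f^[n + m] z ∈ A j → ∃ k, 0 < k ∧ k < m ∧ f^[n + k] z ∈ Y)
    (hx : x ∈ Y) (hrec : ∃ᶠ n in atTop, f^[n] x ∈ Y) {p : Fin d → ℝ} :
    Tendsto (fun k => tauRatio f Y A (k + 1) x) atTop (𝓝 p) ↔
      ∀ j, Tendsto (birkhoffAverage ℝ f ((A j).indicator (1 : α → ℝ)) · x) atTop (𝓝 (p j)) := by
  have hdisj : ∀ j, Disjoint (A j) Y := fun j =>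
    disjoint_left.2 fun y hy => (hU ▸ mem_iUnion_of_mem j hy : y ∈ Yᶜ)
  rw [tendsto_add_atTop_iff_nat (f := fun k => tauRatio f Y A k x) 1, tendsto_pi_nhds]
  refine forall_congr' fun j => ?_
  simp only [tauRatio_apply_eq_birkhoffAverage hx hrec A j (hdisj j)]
  refine ⟨tendsto_birkhoffAverage_of_tendsto_comp (tauSum_strictMono hrec) (fun k => ?_)
    (fun k => ?_), fun h => h.comp (tauSum_strictMono hrec).tendsto_atTop⟩
  · exact indicator_of_notMem ((hdisj j).notMem_of_mem_right (iterate_tauSum_mem hx hrec k)) _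
  · rcases forall_mem_or_forall_notMem_of_noCrossing hU hnc
      (fun m => iterate_notMem_of_mem_Ioo_tauSum (k := k)) j with h | h
    · exact ⟨1, fun m hm => indicator_of_mem (h m hm) _⟩
    · exact ⟨0, fun m hm => indicator_of_notMem (h m hm) _⟩

end ReturnTimes

section Concentration

/-- The measures `μ i` asymptotically carry no mass away from `S`: along `l`, the mass of the
complement of every open set containing `S` tends to `0`. -/
def ConcentratesOn {Ω β : Type*} [TopologicalSpace Ω] [MeasurableSpace Ω] (μ : β → Measure Ω)
    (l : Filter β) (S : Set Ω) : Prop :=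
  ∀ U, IsOpen U → S ⊆ U → Tendsto (fun i => (μ i).real Uᶜ) l (𝓝 0)

theorem exists_isOpen_abs_sub_sum_indicator_le {Ω ι : Type*} [TopologicalSpace Ω] [Fintype ι]
    {A : ι → Set Ω} (hA : Pairwise (Function.onFun Disjoint A)) {ξ : ι → Ω}
    (hξ : ∀ j, ξ j ∈ interior (A j)) (g : BoundedContinuousFunction Ω ℝ) {ε : ℝ} (hε : 0 < ε) :
    ∃ U, IsOpen U ∧ range ξ ⊆ U ∧ ∀ y,
      |g y - ∑ j, (A j).indicator (fun _ => g (ξ j)) y| ≤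
        ε + Uᶜ.indicator (fun _ => 2 * ‖g‖) y := by
  have hstep : ∀ {j y}, y ∈ A j → ∑ i, (A i).indicator (fun _ => g (ξ i)) y = g (ξ j) := by
    intro j y hy
    rw [Finset.sum_eq_single_of_mem j (Finset.mem_univ j), indicator_of_mem hy]
    exact fun i _ hij => indicator_of_notMem ((hA hij).notMem_of_mem_right hy) _
  have hstep_le : ∀ y, |∑ i, (A i).indicator (fun _ => g (ξ i)) y| ≤ ‖g‖ := by
    intro y
    by_cases hy : ∃ j, y ∈ A j
    · obtain ⟨j, hj⟩ := hy
      rw [hstep hj]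
      exact g.norm_coe_le_norm (ξ j)
    · push Not at hy
      simp [hy]
  refine ⟨⋃ j, interior (A j) ∩ {y | |g y - g (ξ j)| < ε},
    isOpen_iUnion fun j => isOpen_interior.inter (isOpen_lt (by fun_prop) continuous_const),
    range_subset_iff.2 fun j => mem_iUnion_of_mem j ⟨hξ j, by simpa using hε⟩, fun y => ?_⟩
  by_cases hy : y ∈ ⋃ j, interior (A j) ∩ {y | |g y - g (ξ j)| < ε}
  · obtain ⟨j, hyj, hlt⟩ := mem_iUnion.1 hy
    rw [hstep (interior_subset hyj), indicator_of_notMem (notMem_compl_iff.2 hy), add_zero]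
    exact hlt.le
  · rw [indicator_of_mem (mem_compl hy)]
    linarith [abs_sub (g y) (∑ i, (A i).indicator (fun _ => g (ξ i)) y), hstep_le y,
      g.norm_coe_le_norm y, Real.norm_eq_abs (g y)]

theorem ConcentratesOn.tendsto_integral_sub_sum {Ω β ι : Type*} [TopologicalSpace Ω]
    [MeasurableSpace Ω] [OpensMeasurableSpace Ω] [Fintype ι] {μ : β → Measure Ω}
    [∀ i, IsProbabilityMeasure (μ i)] {l : Filter β} {A : ι → Set Ω}
    (hAm : ∀ j, MeasurableSet (A j)) (hA : Pairwise (Function.onFun Disjoint A)) {ξ : ι → Ω}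
    (hξ : ∀ j, ξ j ∈ interior (A j)) (hμ : ConcentratesOn μ l (range ξ))
    (g : BoundedContinuousFunction Ω ℝ) :
    Tendsto (fun i => ∫ y, g y ∂μ i - ∑ j, (μ i).real (A j) * g (ξ j)) l (𝓝 0) := by
  refine Metric.tendsto_nhds.2 fun ε hε => ?_
  obtain ⟨U, hU, hξU, hbound⟩ := exists_isOpen_abs_sub_sum_indicator_le hA hξ g (half_pos hε)
  have hsmall : Tendsto (fun i => (μ i).real Uᶜ * (2 * ‖g‖)) l (𝓝 0) := by
    simpa using (hμ U hU hξU).mul_const (2 * ‖g‖)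
  filter_upwards [hsmall.eventually_lt_const (half_pos hε)] with i hi
  have hint : ∀ j, Integrable ((A j).indicator fun _ => g (ξ j)) (μ i) := fun j =>
    (integrable_const _).indicator (hAm j)
  have hUint : Integrable (Uᶜ.indicator fun _ => 2 * ‖g‖) (μ i) :=
    (integrable_const _).indicator hU.measurableSet.compl
  have hsum : ∑ j, (μ i).real (A j) * g (ξ j) =
      ∫ y, ∑ j, (A j).indicator (fun _ => g (ξ j)) y ∂μ i := by
    rw [integral_finsetSum _ fun j _ => hint j]
    simp only [integral_indicator_const _ (hAm _), smul_eq_mul]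
  rw [dist_zero_right, hsum,
    ← integral_sub (g.integrable _) (integrable_finsetSum _ fun j _ => hint j)]
  calc ‖∫ y, g y - ∑ j, (A j).indicator (fun _ => g (ξ j)) y ∂μ i‖
      ≤ ∫ y, ε / 2 + Uᶜ.indicator (fun _ => 2 * ‖g‖) y ∂μ i :=
        norm_integral_le_of_norm_le ((integrable_const _).add hUint) (.of_forall hbound)
    _ = ε / 2 + (μ i).real Uᶜ * (2 * ‖g‖) := by
        rw [integral_add (integrable_const _) hUint,
          integral_indicator_const _ hU.measurableSet.compl]
        simp
    _ < ε := by linarith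

theorem WeakTendsto.concentratesOn {Ω : Type*} [MetricSpace Ω] [MeasurableSpace Ω]
    [OpensMeasurableSpace Ω] {μ : ℕ → Measure Ω} [∀ n, IsFiniteMeasure (μ n)] {ν : Measure Ω}
    (h : WeakTendsto μ ν) {S : Set Ω} (hS : IsClosed S) (hν : ν Sᶜ = 0) :
    ConcentratesOn μ atTop S := by
  intro U hU hSU
  obtain ⟨g, hg0, hg1, hg01⟩ := exists_bounded_zero_one_of_closed hS hU.isClosed_compl
    (disjoint_compl_right_iff_subset.2 hSU)
  have hlim : Tendsto (fun n => ∫ y, g y ∂μ n) atTop (𝓝 0) := by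
    have hae : ∀ᵐ y ∂ν, g y = 0 := mem_of_superset (mem_ae_iff.2 hν) hg0
    simpa [integral_congr_ae hae] using h g
  refine squeeze_zero (fun n => measureReal_nonneg) (fun n => ?_) hlim
  rw [← integral_indicator_one hU.measurableSet.compl]
  refine integral_mono ((integrable_const 1).indicator hU.measurableSet.compl) (g.integrable _) ?_
  exact indicator_le' (fun y hy => (hg1 hy).ge) fun y _ => (hg01 y).1

theorem integral_nuMeasure {Ω : Type*} [TopologicalSpace Ω] [MeasurableSpace Ω]
    [OpensMeasurableSpace Ω] {d : ℕ} (ξ : Fin d → Ω) {p : Fin d → ℝ} (hp : ∀ j, 0 ≤ p j)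
    (g : BoundedContinuousFunction Ω ℝ) : ∫ y, g y ∂nuMeasure ξ p = ∑ j, p j * g (ξ j) := by
  rw [nuMeasure, integral_finsetSum_measure fun j _ =>
    (g.integrable _).smul_measure ENNReal.ofReal_ne_top]
  simp only [integral_smul_measure, integral_dirac' _ _ g.continuous.measurable.stronglyMeasurable,
    ENNReal.toReal_ofReal (hp _), smul_eq_mul]

theorem nuMeasure_compl_range {Ω : Type*} [TopologicalSpace Ω] [T1Space Ω] [MeasurableSpace Ω]
    [OpensMeasurableSpace Ω] {d : ℕ} (ξ : Fin d → Ω) (p : Fin d → ℝ) :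
    nuMeasure ξ p (range ξ)ᶜ = 0 := by
  simp [nuMeasure, Measure.dirac_apply]

theorem weakTendsto_nuMeasure_iff {Ω : Type*} [MetricSpace Ω] [MeasurableSpace Ω]
    [OpensMeasurableSpace Ω] {μ : ℕ → Measure Ω} [∀ n, IsProbabilityMeasure (μ n)] {d : ℕ}
    {A : Fin d → Set Ω} (hAm : ∀ j, MeasurableSet (A j))
    (hA : Pairwise (Function.onFun Disjoint A)) {ξ : Fin d → Ω}
    (hξ : ∀ j, ξ j ∈ interior (A j)) {p : Fin d → ℝ} (hp : ∀ j, 0 ≤ p j) :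
    WeakTendsto μ (nuMeasure ξ p) ↔ ConcentratesOn μ atTop (range ξ) ∧
      ∀ j, Tendsto (fun n => (μ n).real (A j)) atTop (𝓝 (p j)) := by
  refine ⟨fun h => ?_, fun ⟨hconc, hfreq⟩ g => ?_⟩
  · have hconc := h.concentratesOn (finite_range ξ).isClosed (nuMeasure_compl_range ξ p)
    refine ⟨hconc, fun j => ?_⟩
    obtain ⟨g, hg0, hg1, -⟩ := exists_bounded_zero_one_of_closed
      (isOpen_interior (s := A j)).isClosed_compl (isClosed_singleton (x := ξ j))
      (disjoint_singleton_right.2 (notMem_compl_iff.2 (hξ j)))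
    have hgξ : ∀ c : Fin d → ℝ, ∑ i, c i * g (ξ i) = c j := fun c => by
      rw [Finset.sum_eq_single_of_mem j (Finset.mem_univ j) fun i _ hij => ?_]
      · simp [hg1 (mem_singleton (ξ j))]
      · have hout : ξ i ∈ (interior (A j))ᶜ := fun hi =>
          (hA hij).notMem_of_mem_left (interior_subset (hξ i)) (interior_subset hi)
        simp [hg0 hout]
    have hint := h g
    have hdiff := hconc.tendsto_integral_sub_sum hAm hA hξ g
    rw [integral_nuMeasure ξ hp, hgξ] at hint
    simp only [hgξ] at hdiff
    simpa using hint.sub hdiff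
  · rw [integral_nuMeasure ξ hp]
    have hsum := tendsto_finsetSum Finset.univ fun j _ => (hfreq j).mul_const (g (ξ j))
    simpa using (hconc.tendsto_integral_sub_sum hAm hA hξ g).add hsum

theorem tendsto_measureReal_compl_iUnion {Ω β ι : Type*} [MeasurableSpace Ω] [Fintype ι]
    {μ : β → Measure Ω} [∀ i, IsProbabilityMeasure (μ i)] {l : Filter β} {A : ι → Set Ω}
    (hAm : ∀ j, MeasurableSet (A j)) (hA : Pairwise (Function.onFun Disjoint A)) {p : ι → ℝ}
    (h : ∀ j, Tendsto (fun i => (μ i).real (A j)) l (𝓝 (p j))) :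
    Tendsto (fun i => (μ i).real (⋃ j, A j)ᶜ) l (𝓝 (1 - ∑ j, p j)) := by
  have hadd : ∀ i, (μ i).real (⋃ j, A j) = ∑ j, (μ i).real (A j) := fun i =>
    measureReal_iUnion_fintype hA hAm
  simp only [probReal_compl_eq_one_sub (MeasurableSet.iUnion hAm), hadd]
  exact (tendsto_finsetSum Finset.univ fun j _ => h j).const_sub 1

end Concentration

section EmpiricalMeasures

variable {Ω : Type*} [MeasurableSpace Ω] {f : Ω → Ω} {x : Ω}

instance isProbabilityMeasure_empMeasure_succ (n : ℕ) :
    IsProbabilityMeasure (empMeasure f (n + 1) x) := by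
  constructor
  simp only [empMeasure, Measure.smul_apply, Measure.finsetSum_apply, measure_univ,
    Finset.sum_const, Finset.card_range, nsmul_eq_mul, mul_one, smul_eq_mul]
  exact ENNReal.inv_mul_cancel (by simp) (by simp)

theorem measureReal_empMeasure {A : Set Ω} (hA : MeasurableSet A) (n : ℕ) :
    (empMeasure f n x).real A = birkhoffAverage ℝ f (A.indicator (1 : Ω → ℝ)) n x := by
  have hdirac : ∀ y, (Measure.dirac y A).toReal = A.indicator (1 : Ω → ℝ) y := fun y => by
    by_cases hy : y ∈ A <;> simp [Measure.dirac_apply' _ hA, hy]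
  rw [empMeasure, measureReal_ennreal_smul_apply, measureReal_def, Measure.finsetSum_apply,
    ENNReal.toReal_sum fun _ _ => measure_ne_top _ _, ENNReal.toReal_inv, ENNReal.toReal_natCast]
  simp only [hdirac, birkhoffAverage, birkhoffSum, smul_eq_mul]

theorem tendsto_measureReal_empMeasure_iff {A : Set Ω} (hA : MeasurableSet A) {c : ℝ} :
    Tendsto (fun n => (empMeasure f (n + 1) x).real A) atTop (𝓝 c) ↔
      Tendsto (birkhoffAverage ℝ f (A.indicator (1 : Ω → ℝ)) · x) atTop (𝓝 c) := by
  simp only [measureReal_empMeasure hA]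
  exact tendsto_add_atTop_iff_nat (f := (birkhoffAverage ℝ f (A.indicator (1 : Ω → ℝ)) · x)) 1

theorem concentratesOn_empMeasure [TopologicalSpace Ω] [OpensMeasurableSpace Ω] {S Y : Set Ω}
    (hYm : MeasurableSet Y)
    (hbd : ∀ U, IsOpen U → S ⊆ U → ∃ B : ℕ, ∀ z ∈ Uᶜ, ∃ n ≤ B, f^[n] z ∈ Y)
    (hY : Tendsto (fun n => (empMeasure f (n + 1) x).real Y) atTop (𝓝 0)) :
    ConcentratesOn (fun n => empMeasure f (n + 1) x) atTop S := by
  intro U hU hSU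
  obtain ⟨B, hB⟩ := hbd U hU hSU
  rw [tendsto_measureReal_empMeasure_iff hU.measurableSet.compl]
  exact tendsto_birkhoffAverage_indicator_zero_of_hit hB
    ((tendsto_measureReal_empMeasure_iff hYm).1 hY)

end EmpiricalMeasures

theorem stmt5_general {Ω : Type*} [MetricSpace Ω] [MeasurableSpace Ω] [OpensMeasurableSpace Ω]
    (f : Ω → Ω) (Y : Set Ω) {d : ℕ} (ξ : Fin d → Ω) (A : Fin d → Set Ω)
    (hAm : ∀ j, MeasurableSet (A j)) (hA : Pairwise (Function.onFun Disjoint A))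
    (hU : (⋃ j, A j) = Yᶜ) (hξ : ∀ j, ξ j ∈ interior (A j))
    (hnc : ∀ z : Ω, ∀ n m : ℕ, ∀ i j, i ≠ j →
      f^[n] z ∈ A i → f^[n + m] z ∈ A j → ∃ k, 0 < k ∧ k < m ∧ f^[n + k] z ∈ Y)
    (hbd : ∀ K : Set Ω, IsClosed K → (∀ j, ξ j ∉ K) →
      ∃ B : ℕ, ∀ z ∈ K \ Y, ∃ n, 1 ≤ n ∧ n ≤ B ∧ f^[n] z ∈ Y)
    {x : Ω} (hx : x ∈ Y) (hrec : ∃ᶠ n in atTop, f^[n] x ∈ Y)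
    {p : Fin d → ℝ} (hp : p ∈ simplexS d) :
    WeakTendsto (fun n => empMeasure f (n + 1) x) (nuMeasure ξ p) ↔
      Tendsto (fun k => tauRatio f Y A (k + 1) x) atTop (𝓝 p) := by
  have hY : Y = (⋃ j, A j)ᶜ := by rw [hU, compl_compl]
  have hYm : MeasurableSet Y := hY ▸ (MeasurableSet.iUnion hAm).compl
  have hhit : ∀ U, IsOpen U → range ξ ⊆ U → ∃ B : ℕ, ∀ z ∈ Uᶜ, ∃ n ≤ B, f^[n] z ∈ Y := by
    intro U hUo hξU
    obtain ⟨B, hB⟩ := hbd Uᶜ hUo.isClosed_compl fun j hj => hj (hξU (mem_range_self j))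
    refine ⟨B, fun z hz => ?_⟩
    by_cases hzY : z ∈ Y
    · exact ⟨0, B.zero_le, hzY⟩
    · exact (hB z ⟨hz, hzY⟩).imp fun n hn => hn.2
  rw [tendsto_tauRatio_iff hU hnc hx hrec,
    weakTendsto_nuMeasure_iff hAm hA hξ fun j => (hp.1 j).1]
  simp only [← tendsto_measureReal_empMeasure_iff (hAm _)]
  refine and_iff_right_of_imp fun hfreq => concentratesOn_empMeasure hYm hhit ?_
  simpa [hY, hp.2] using tendsto_measureReal_compl_iUnion hAm hA hfreq

/-- For every `p̄ ∈ S`: the empirical measures `e_n(x)` converge weakly* to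
`ν_p̄` iff `τ̄_k(x)/τ_k(x) → p̄`. -/
theorem stmt5 (f : X → X) (hf : Measurable f)
    (Y : Set X) (hYc : IsCompact Y)
    (d : ℕ) (hd : 1 ≤ d) (ξ : Fin d → X) (hξ : Function.Injective ξ)
    (hξY : ∀ j, ξ j ∉ Y)
    (Xp : Fin d → Set X) (hXm : ∀ j, MeasurableSet (Xp j))
    (hXd : Pairwise (Function.onFun Disjoint Xp))
    (hXU : (⋃ j, Xp j) = Yᶜ)
    (hξint : ∀ j, ξ j ∈ interior (Xp j))
    (hξcl : ∀ i j, i ≠ j → ξ i ∉ closure (Xp j))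
    (hnc : ∀ z : X, ∀ n m : ℕ, ∀ i j, i ≠ j →
      f^[n] z ∈ Xp i → f^[n + m] z ∈ Xp j → ∃ k, 0 < k ∧ k < m ∧ f^[n + k] z ∈ Y)
    (hbd : ∀ K : Set X, IsCompact K → (∀ j, ξ j ∉ K) →
      ∃ B : ℕ, ∀ z ∈ K \ Y, ∃ n, 1 ≤ n ∧ n ≤ B ∧ f^[n] z ∈ Y)
    (x : X) (hxY : x ∈ Y) (hxrec : ∀ N : ℕ, ∃ n, N ≤ n ∧ 1 ≤ n ∧ f^[n] x ∈ Y)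
    (p : Fin d → ℝ) (hp : p ∈ simplexS d) :
    WeakTendsto (fun n => empMeasure f (n + 1) x) (nuMeasure ξ p) ↔
      Tendsto (fun k => tauRatio f Y Xp (k + 1) x) atTop (𝓝 p) := by
  exact stmt5_general f Y ξ Xp hXm hXd hXU hξint hnc (fun K hK => hbd K hK.isCompact) hxY
    (frequently_atTop.2 fun N => (hxrec N).imp fun _ hn => ⟨hn.1, hn.2.2⟩) hp
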